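/- arXiv:2409.19889 — 3 statements merged into one kernel-verified Lean document; each statement's English description precedes it below -/
import Mathlib

section
/- Let q > 1 and p < q − 1 be real numbers. Then there is a constant C > 0 such that for all s ≥ 0 the improper integral ∫_s^∞ (1+τ)^p sin((1+τ)^q) dτ converges and satisfies |∫_s^∞ (1+τ)^p sin((1+τ)^q) dτ| ≤ C (1+s)^{p−q+1}. -/
open MeasureTheory Filter Real Set intervalIntegral

lemma aux15 (p q a : ℝ) (hq : 1 < q) (hpq : p < q - 1) (ha : 0 < a) :
    ∃ L : ℝ, Tendsto (fun B => ∫ x in a..B, x ^ p * Real.sin (x ^ q)) atTop (nhds L) ∧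
      |L| ≤ (2 / q) * a ^ (p - q + 1) := by
  obtain ⟨r, hr⟩ : ∃ r, r = p - q + 1 := ⟨_, rfl⟩
  rw [← hr]
  have hr0 : r < 0 := by linarith
  have hq0 : 0 < q := by linarith
  let F : ℝ → ℝ := fun x => -(1 / q) * (x ^ r * Real.cos (x ^ q))
  let g : ℝ → ℝ := fun x => (r / q) * x ^ (r - 1) * Real.cos (x ^ q)
  have hF : ∀ x, 0 < x → HasDerivAt F (x ^ p * Real.sin (x ^ q) - g x) x := by
    intro x hx
    have h1 : HasDerivAt (fun x : ℝ => x ^ r) (r * x ^ (r - 1)) x :=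
      hasDerivAt_rpow_const (Or.inl hx.ne')
    have h2 : HasDerivAt (fun x : ℝ => x ^ q) (q * x ^ (q - 1)) x :=
      hasDerivAt_rpow_const (Or.inl hx.ne')
    have h3 := (h1.mul h2.cos).const_mul (-(1 / q))
    refine h3.congr_deriv ?_
    have h4 : x ^ p = x ^ r * x ^ (q - 1) := by
      rw [← rpow_add hx]; congr 1; rw [hr]; ring
    simp only [g]
    rw [h4]
    field_simp
    ring
  have hgc : ContinuousOn g (Ioi 0) := by
    intro x hx
    have hx' : x ≠ 0 := (show (0:ℝ) < x from hx).ne'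
    have h1 : ContinuousAt (fun x : ℝ => x ^ (r - 1)) x := continuousAt_rpow_const _ _ (Or.inl hx')
    have h2 : ContinuousAt (fun x : ℝ => x ^ q) x := continuousAt_rpow_const _ _ (Or.inl hx')
    exact ((continuousAt_const.mul h1).mul (Real.continuous_cos.continuousAt.comp h2)).continuousWithinAt
  have hfc : ContinuousOn (fun x : ℝ => x ^ p * Real.sin (x ^ q)) (Ioi 0) := by
    intro x hx
    have hx' : x ≠ 0 := (show (0:ℝ) < x from hx).ne'
    have h1 : ContinuousAt (fun x : ℝ => x ^ p) x := continuousAt_rpow_const _ _ (Or.inl hx')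
    have h2 : ContinuousAt (fun x : ℝ => x ^ q) x := continuousAt_rpow_const _ _ (Or.inl hx')
    exact (h1.mul (Real.continuous_sin.continuousAt.comp h2)).continuousWithinAt
  have hsub : Ioi a ⊆ Ioi (0:ℝ) := Ioi_subset_Ioi ha.le
  have hbi : IntegrableOn (fun x : ℝ => (-r / q) * x ^ (r - 1)) (Ioi a) :=
    (integrableOn_Ioi_rpow_of_lt (by linarith) ha).const_mul _
  have hbd : ∀ x, 0 < x → ‖g x‖ ≤ (-r / q) * x ^ (r - 1) := by
    intro x hx
    have h0 : 0 ≤ x ^ (r - 1) := (rpow_pos_of_pos hx _).le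
    simp only [g, norm_mul, Real.norm_eq_abs, abs_of_nonneg h0, abs_div, abs_of_neg hr0,
      abs_of_pos hq0]
    have h1 := Real.abs_cos_le_one (x ^ q)
    have h2 : 0 ≤ -r / q * x ^ (r - 1) := mul_nonneg (div_nonneg (by linarith) hq0.le) h0
    exact mul_le_of_le_one_right h2 h1
  have hae : ∀ᵐ x ∂(volume.restrict (Ioi a)), ‖g x‖ ≤ (-r / q) * x ^ (r - 1) := by
    filter_upwards [ae_restrict_mem measurableSet_Ioi] with x hx
    exact hbd x (hsub hx)
  have hgi : IntegrableOn g (Ioi a) :=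
    Integrable.mono' hbi ((hgc.mono hsub).aestronglyMeasurable measurableSet_Ioi) hae
  have hgL := intervalIntegral_tendsto_integral_Ioi a hgi tendsto_id
  have hFt : Tendsto F atTop (nhds 0) := by
    have h1 : Tendsto (fun x : ℝ => x ^ r) atTop (nhds 0) := by
      simpa using tendsto_rpow_neg_atTop (by linarith : 0 < -r)
    have h2 : Tendsto (fun x : ℝ => x ^ r * Real.cos (x ^ q)) atTop (nhds 0) := by
      refine squeeze_zero_norm' ?_ h1
      filter_upwards [eventually_gt_atTop 0] with x hx
      have h0 : 0 ≤ x ^ r := (rpow_pos_of_pos hx _).le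
      rw [norm_mul, Real.norm_eq_abs, Real.norm_eq_abs, abs_of_nonneg h0]
      exact mul_le_of_le_one_right h0 (Real.abs_cos_le_one _)
    have h3 := h2.const_mul (-(1 / q))
    rw [mul_zero] at h3
    exact h3
  refine ⟨0 - F a + ∫ x in Ioi a, g x, ?_, ?_⟩
  · refine ((hFt.sub_const (F a)).add hgL).congr' ?_
    filter_upwards [eventually_ge_atTop a] with B hB
    have hs : uIcc a B ⊆ Ioi 0 := by
      rw [uIcc_of_le hB]; exact fun x hx => lt_of_lt_of_le ha hx.1
    have hfi := (hfc.mono hs).intervalIntegrable (μ := volume)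
    have hgi' := (hgc.mono hs).intervalIntegrable (μ := volume)
    have := integral_eq_sub_of_hasDerivAt (fun x hx => hF x (hs hx)) (hfi.sub hgi')
    rw [intervalIntegral.integral_sub hfi hgi'] at this
    simp only [id]
    linarith
  · have h1 : ‖∫ x in Ioi a, g x‖ ≤ ∫ x in Ioi a, (-r / q) * x ^ (r - 1) :=
      norm_integral_le_of_norm_le hbi hae
    rw [MeasureTheory.integral_const_mul, integral_Ioi_rpow_of_lt (by linarith) ha, sub_add_cancel] at h1
    have h2 : -r / q * (-a ^ r / r) = 1 / q * a ^ r := by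
      have := hr0.ne
      field_simp
    have h0 : 0 ≤ a ^ r := (rpow_pos_of_pos ha _).le
    have h3 : |F a| ≤ 1 / q * a ^ r := by
      simp only [F, abs_mul, abs_neg, abs_of_nonneg h0, abs_of_pos (one_div_pos.2 hq0)]
      exact mul_le_mul_of_nonneg_left (mul_le_of_le_one_right h0 (Real.abs_cos_le_one _))
        (one_div_pos.2 hq0).le
    rw [h2, Real.norm_eq_abs] at h1
    have h4 := abs_add_le (0 - F a) (∫ x in Ioi a, g x)
    rw [zero_sub, abs_neg] at h4
    rw [zero_sub]
    have h5 : 2 / q * a ^ r = 1 / q * a ^ r + 1 / q * a ^ r := by ring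
    linarith

/-- For `q > 1` and `p < q - 1`, the improper integral
`∫_s^∞ (1+τ)^p sin ((1+τ)^q) dτ` converges for every `s ≥ 0` and is bounded by
`C (1+s)^(p-q+1)`. -/
theorem stmt15 (p q : ℝ) (hq : 1 < q) (hpq : p < q - 1) :
    ∃ C > (0:ℝ), ∀ s ≥ (0:ℝ), ∃ L : ℝ,
      Tendsto (fun A => ∫ τ in s..A, (1 + τ) ^ p * Real.sin ((1 + τ) ^ q))
        atTop (nhds L) ∧
      |L| ≤ C * (1 + s) ^ (p - q + 1) := by
  refine ⟨2 / q, by positivity, fun s hs => ?_⟩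
  obtain ⟨L, hL, hb⟩ := aux15 p q (1 + s) hq hpq (by linarith)
  refine ⟨L, ?_, hb⟩
  have := hL.comp (tendsto_atTop_add_const_left atTop (1:ℝ) tendsto_id)
  refine this.congr fun A => ?_
  exact (intervalIntegral.integral_comp_add_left
    (fun x : ℝ => x ^ p * Real.sin (x ^ q)) (1:ℝ)).symm
end

section
/- Let p ≥ −1 and q > 1 with p < q − 2, and set σ₁(t) := (1+t)^p sin((1+t)^q) for t ≥ 0. Then there is a constant C > 0 such that for all t ≥ 0, ∫_t^∞ |∫_s^∞ σ₁(τ) dτ| ds ≤ C (1+t)^{p−q+2}. -/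
open MeasureTheory Filter Real Set intervalIntegral

lemma aux_bound (p q : ℝ) (hq : 1 < q) (hpq : p < q - 2)
    (s A : ℝ) (hs : 0 ≤ s) (hA : s ≤ A) :
    |∫ τ in s..A, (1 + τ) ^ p * Real.sin ((1 + τ) ^ q)| ≤ 2 / q * (1 + s) ^ (p - q + 1) := by
  have hq0 : q ≠ 0 := by positivity
  have hqp : 0 < q := by positivity
  set a := p - q + 1 with ha
  have hpos : ∀ τ ∈ Set.uIcc s A, 0 < 1 + τ := by
    intro τ hτ
    rw [Set.uIcc_of_le hA] at hτ
    linarith [hτ.1]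
  have hc : ∀ r : ℝ, ContinuousOn (fun τ : ℝ => (1 + τ) ^ r) (Set.uIcc s A) := by
    intro r
    apply ContinuousOn.rpow_const (by fun_prop)
    intro τ hτ
    exact Or.inl (hpos τ hτ).ne'
  have hd : ∀ r : ℝ, ∀ τ ∈ Set.uIcc s A,
      HasDerivAt (fun τ : ℝ => (1 + τ) ^ r) (r * (1 + τ) ^ (r - 1)) τ := by
    intro r τ hτ
    have := ((hasDerivAt_id τ).const_add 1).rpow_const (p := r) (Or.inl (hpos τ hτ).ne')
    simpa using this
  have hG : ∀ τ ∈ Set.uIcc s A, HasDerivAt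
      (fun τ : ℝ => -(1 / q) * ((1 + τ) ^ a * Real.cos ((1 + τ) ^ q)))
      ((1 + τ) ^ p * Real.sin ((1 + τ) ^ q)
        - a / q * (1 + τ) ^ (a - 1) * Real.cos ((1 + τ) ^ q)) τ := by
    intro τ hτ
    have h := (((hd a τ hτ).mul (hd q τ hτ).cos)).const_mul (-(1 / q))
    refine h.congr_deriv ?_
    have : (1 + τ) ^ p = (1 + τ) ^ a * (1 + τ) ^ (q - 1) := by
      rw [← Real.rpow_add (hpos τ hτ)]; congr 1; rw [ha]; ring
    rw [this]
    field_simp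
    ring
  have hcsin : ContinuousOn (fun τ : ℝ => (1 + τ) ^ p * Real.sin ((1 + τ) ^ q)) (Set.uIcc s A) :=
    (hc p).mul (Real.continuous_sin.comp_continuousOn (hc q))
  have hccos : ContinuousOn (fun τ : ℝ => a / q * (1 + τ) ^ (a - 1) * Real.cos ((1 + τ) ^ q))
      (Set.uIcc s A) :=
    (continuousOn_const.mul (hc _)).mul (Real.continuous_cos.comp_continuousOn (hc q))
  have h1 := intervalIntegral.integral_eq_sub_of_hasDerivAt hG
    (hcsin.sub hccos).intervalIntegrable
  rw [intervalIntegral.integral_sub hcsin.intervalIntegrable hccos.intervalIntegrable] at h1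
  have hB : ∀ τ ∈ Set.uIcc s A, HasDerivAt
      (fun τ : ℝ => -(1 / q) * (1 + τ) ^ a) (-(a / q) * (1 + τ) ^ (a - 1)) τ := by
    intro τ hτ
    refine ((hd a τ hτ).const_mul (-(1 / q))).congr_deriv ?_
    ring
  have hBi : IntervalIntegrable (fun τ : ℝ => -(a / q) * (1 + τ) ^ (a - 1)) volume s A :=
    (continuousOn_const.mul (hc _)).intervalIntegrable
  have h2 := intervalIntegral.integral_eq_sub_of_hasDerivAt hB hBi
  have h3 : ‖∫ τ in s..A, a / q * (1 + τ) ^ (a - 1) * Real.cos ((1 + τ) ^ q)‖ ≤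
      ∫ τ in s..A, -(a / q) * (1 + τ) ^ (a - 1) := by
    apply intervalIntegral.norm_integral_le_of_norm_le hA _ hBi
    filter_upwards with τ hτ
    have hτp : 0 < 1 + τ := by linarith [hτ.1]
    have haq : a / q ≤ 0 := div_nonpos_of_nonpos_of_nonneg (by linarith) hqp.le
    have hr : 0 < (1 + τ) ^ (a - 1) := Real.rpow_pos_of_pos hτp _
    rw [Real.norm_eq_abs, abs_mul, abs_mul, abs_of_nonpos haq, abs_of_pos hr]
    exact mul_le_of_le_one_right (mul_nonneg (by linarith) hr.le) (Real.abs_cos_le_one _)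
  rw [h2, Real.norm_eq_abs] at h3
  have hb : ∀ τ, 0 < 1 + τ → |(1 / q) * ((1 + τ) ^ a * Real.cos ((1 + τ) ^ q))| ≤
      1 / q * (1 + τ) ^ a := by
    intro τ hτ
    have hr : 0 < (1 + τ) ^ a := Real.rpow_pos_of_pos hτ _
    rw [abs_mul, abs_mul, abs_of_pos hr, abs_of_pos (by positivity : 0 < 1 / q)]
    gcongr
    exact mul_le_of_le_one_right hr.le (Real.abs_cos_le_one _)
  have b1 := abs_le.1 (hb s (by linarith))
  have b2 := abs_le.1 (hb A (by linarith))
  have b3 := abs_le.1 h3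
  have e : 2 / q * (1 + s) ^ a = 2 * (1 / q * (1 + s) ^ a) := by ring
  rw [e, abs_le]
  constructor <;> linarith [b1.1, b1.2, b2.1, b2.2, b3.1, b3.2]

theorem stmt16 (p q : ℝ) (hp : -1 ≤ p) (hq : 1 < q) (hpq : p < q - 2)
    (σ₁ : ℝ → ℝ) (hσ₁ : ∀ t, σ₁ t = (1 + t) ^ p * Real.sin ((1 + t) ^ q)) :
    ∃ C > (0:ℝ), ∀ S : ℝ → ℝ,
      (∀ s, Tendsto (fun A => ∫ τ in s..A, σ₁ τ) atTop (nhds (S s))) →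
      ∀ t ≥ (0:ℝ),
        IntegrableOn (fun s => |S s|) (Set.Ici t) ∧
        (∫ s in Set.Ici t, |S s|) ≤ C * (1 + t) ^ (p - q + 2) := by
  have hqp : 0 < q := by positivity
  have hneg : 0 < -(p - q + 2) := by linarith
  refine ⟨2 / q * (1 / -(p - q + 2)), by positivity, ?_⟩
  intro S hS t ht
  have hbound : ∀ s, 0 ≤ s → |S s| ≤ 2 / q * (s + 1) ^ (p - q + 1) := by
    intro s hs
    refine le_of_tendsto (hS s).abs ?_
    filter_upwards [eventually_ge_atTop s] with A hA
    have := aux_bound p q hq hpq s A hs hA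
    simp only [hσ₁]
    rwa [add_comm s 1]
  have hcont : Continuous (fun τ : ℝ => σ₁ (max τ 0)) := by
    have hne : ∀ τ : ℝ, 1 + max τ 0 ≠ 0 := fun τ => by
      have := le_max_right τ 0
      linarith
    simp only [hσ₁]
    have h : ∀ r : ℝ, Continuous (fun τ : ℝ => (1 + max τ 0) ^ r) := fun r =>
      Continuous.rpow_const (by fun_prop) (fun τ => Or.inl (hne τ))
    exact (h p).mul (Real.continuous_sin.comp (h q))
  have hSeq : ∀ s, 0 ≤ s → S s = S 0 - ∫ τ in (0:ℝ)..s, σ₁ (max τ 0) := by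
    intro s hs
    refine tendsto_nhds_unique (hS s) ?_
    refine ((hS 0).sub_const (∫ τ in (0:ℝ)..s, σ₁ (max τ 0))).congr' ?_
    filter_upwards [eventually_ge_atTop s] with A hA
    have key : ∀ u v : ℝ, 0 ≤ u → u ≤ v →
        ∫ τ in u..v, σ₁ τ = ∫ τ in u..v, σ₁ (max τ 0) := by
      intro u v hu huv
      apply intervalIntegral.integral_congr
      intro τ hτ
      rw [Set.uIcc_of_le huv] at hτ
      simp only [max_eq_left (hu.trans hτ.1)]
    rw [key 0 A le_rfl (hs.trans hA), key s A hs hA]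
    exact intervalIntegral.integral_interval_sub_left (hcont.intervalIntegrable _ _)
      (hcont.intervalIntegrable _ _)
  have hScont : ContinuousOn (fun s => |S s|) (Set.Ici t) := by
    have h : Continuous (fun s => |S 0 - ∫ τ in (0:ℝ)..s, σ₁ (max τ 0)|) :=
      (continuous_const.sub (intervalIntegral.continuous_primitive
        (fun a b => hcont.intervalIntegrable a b) 0)).abs
    refine h.continuousOn.congr ?_
    intro s hs
    simp only [hSeq s (ht.trans hs)]
  have hgi : IntegrableOn (fun s : ℝ => 2 / q * (s + 1) ^ (p - q + 1)) (Set.Ici t) := by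
    rw [integrableOn_Ici_iff_integrableOn_Ioi]
    exact (integrableOn_add_rpow_Ioi_of_lt (by linarith) (by linarith)).const_mul _
  have hbnd : ∀ s ∈ Set.Ici t, |S s| ≤ 2 / q * (s + 1) ^ (p - q + 1) :=
    fun s hs => hbound s (ht.trans hs)
  have hi : IntegrableOn (fun s => |S s|) (Set.Ici t) := by
    refine Integrable.mono' hgi (hScont.aestronglyMeasurable measurableSet_Ici) ?_
    filter_upwards [ae_restrict_mem measurableSet_Ici] with s hs
    simpa using hbnd s hs
  refine ⟨hi, (setIntegral_mono_on hi hgi measurableSet_Ici hbnd).trans (le_of_eq ?_)⟩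
  have hshift := (measurePreserving_add_right (volume : Measure ℝ) 1).setIntegral_preimage_emb
    (measurableEmbedding_addRight 1) (fun x : ℝ => x ^ (p - q + 1)) (Set.Ioi (t + 1))
  have hpre : (fun x : ℝ => x + 1) ⁻¹' (Set.Ioi (t + 1)) = Set.Ioi t := by
    ext x
    simp
  rw [hpre] at hshift
  rw [MeasureTheory.integral_const_mul, integral_Ici_eq_integral_Ioi, hshift,
    integral_Ioi_rpow_of_lt (by linarith) (by linarith)]
  have e : p - q + 1 + 1 = p - q + 2 := by ring
  have hne : p - q + 2 ≠ 0 := by linarith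
  rw [e, add_comm t 1, one_div, inv_neg, neg_div, div_eq_mul_inv]
  ring
end

section
/- Let p ≥ −1, q > 1 with p < q − 2, let 0 < μ₀ < 1, let m be a positive integer, and set b(t) := μ₀(1+t)^{-1} + (1+t)^p sin((1+t)^q) and β₁ := −q + 1 + (−p+q−1)/(m+1). Then there is a constant C > 0 such that for all t ≥ 0 and all k = 0,…,m, |b^{(k)}(t)| ≤ C (1+t)^{−β₁(k+1)}. -/
open MeasureTheory Filter Real Set

/-- Finite sums of oscillating powers with exponents at most `E`. -/
inductive Good (q : ℝ) : ℝ → (ℝ → ℝ) → Prop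
  | pow (E c a : ℝ) (h : a ≤ E) : Good q E (fun t => c * (1 + t) ^ a)
  | sin (E c a : ℝ) (h : a ≤ E) : Good q E (fun t => c * (1 + t) ^ a * Real.sin ((1 + t) ^ q))
  | cos (E c a : ℝ) (h : a ≤ E) : Good q E (fun t => c * (1 + t) ^ a * Real.cos ((1 + t) ^ q))
  | add (E : ℝ) (f g : ℝ → ℝ) (hf : Good q E f) (hg : Good q E g) :
      Good q E (fun t => f t + g t)

lemma hasDerivAt_pow_aux (a t : ℝ) (ht : -1 < t) :
    HasDerivAt (fun t : ℝ => (1 + t) ^ a) (a * (1 + t) ^ (a - 1)) t := by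
  have h1 : HasDerivAt (fun t : ℝ => 1 + t) 1 t := (hasDerivAt_id t).const_add 1
  have := h1.rpow_const (p := a) (Or.inl (by linarith))
  convert this using 1
  ring

lemma Good.deriv {q : ℝ} (hq : 1 < q) {E : ℝ} {f : ℝ → ℝ} (h : Good q E f) :
    ∃ g, Good q (E + (q - 1)) g ∧ ∀ t, -1 < t → HasDerivAt f (g t) t := by
  induction h with
  | pow c a h =>
    refine ⟨_, Good.pow (E + (q - 1)) (c * a) (a - 1) (by linarith), fun t ht => ?_⟩
    refine HasDerivAt.congr_deriv ((hasDerivAt_pow_aux a t ht).const_mul c) ?_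
    beta_reduce
    ring
  | sin c a h =>
    refine ⟨_, Good.add _ _ _ (Good.sin (E + (q - 1)) (c * a) (a - 1) (by linarith))
      (Good.cos (E + (q - 1)) (c * q) (a + (q - 1)) (by linarith)), fun t ht => ?_⟩
    refine HasDerivAt.congr_deriv (((hasDerivAt_pow_aux a t ht).const_mul c).mul (hasDerivAt_pow_aux q t ht).sin) ?_
    beta_reduce
    rw [Real.rpow_add (by linarith : 0 < 1 + t)]
    ring
  | cos c a h =>
    refine ⟨_, Good.add _ _ _ (Good.cos (E + (q - 1)) (c * a) (a - 1) (by linarith))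
      (Good.sin (E + (q - 1)) (-(c * q)) (a + (q - 1)) (by linarith)), fun t ht => ?_⟩
    refine HasDerivAt.congr_deriv (((hasDerivAt_pow_aux a t ht).const_mul c).mul (hasDerivAt_pow_aux q t ht).cos) ?_
    beta_reduce
    rw [Real.rpow_add (by linarith : 0 < 1 + t)]
    ring
  | add f g hf hg ihf ihg =>
    obtain ⟨f', hf', hf''⟩ := ihf
    obtain ⟨g', hg', hg''⟩ := ihg
    exact ⟨_, Good.add _ _ _ hf' hg', fun t ht => (hf'' t ht).add (hg'' t ht)⟩

lemma Good.bound_aux (c a E t u : ℝ) (ht : 0 ≤ t) (h : a ≤ E) (hu : |u| ≤ 1) :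
    |c * (1 + t) ^ a * u| ≤ (|c| + 1) * (1 + t) ^ E := by
  have h0 : 0 ≤ (1 + t) ^ a := Real.rpow_nonneg (by linarith) _
  have h1 : (1 + t) ^ a ≤ (1 + t) ^ E := Real.rpow_le_rpow_of_exponent_le (by linarith) h
  rw [abs_mul, abs_mul, abs_of_nonneg h0]
  calc |c| * (1 + t) ^ a * |u| ≤ |c| * (1 + t) ^ a * 1 := by gcongr
    _ ≤ (|c| + 1) * (1 + t) ^ E := by
      rw [mul_one]
      gcongr
      linarith

lemma Good.bound {q E : ℝ} {f : ℝ → ℝ} (h : Good q E f) :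
    ∃ C > (0 : ℝ), ∀ t ≥ (0 : ℝ), |f t| ≤ C * (1 + t) ^ E := by
  induction h with
  | pow c a h =>
    refine ⟨|c| + 1, by positivity, fun t ht => ?_⟩
    simpa using Good.bound_aux c a E t 1 ht h (by simp)
  | sin c a h =>
    exact ⟨|c| + 1, by positivity, fun t ht =>
      Good.bound_aux c a E t _ ht h (Real.abs_sin_le_one _)⟩
  | cos c a h =>
    exact ⟨|c| + 1, by positivity, fun t ht =>
      Good.bound_aux c a E t _ ht h (Real.abs_cos_le_one _)⟩
  | add f g hf hg ihf ihg =>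
    obtain ⟨C, hC, hC'⟩ := ihf
    obtain ⟨D, hD, hD'⟩ := ihg
    refine ⟨C + D, by positivity, fun t ht => ?_⟩
    have := abs_add_le (f t) (g t)
    have := hC' t ht
    have := hD' t ht
    linarith

lemma Good.iter {q : ℝ} (hq : 1 < q) {E : ℝ} {f : ℝ → ℝ} (h : Good q E f) (k : ℕ) :
    ∃ g, Good q (E + k * (q - 1)) g ∧ ∀ t, -1 < t → iteratedDeriv k f t = g t := by
  induction k with
  | zero => exact ⟨f, by simpa using h, fun t _ => by simp⟩
  | succ k ih =>
    obtain ⟨g, hg, hg'⟩ := ih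
    obtain ⟨g', hd, hd'⟩ := hg.deriv hq
    refine ⟨g', ?_, fun t ht => ?_⟩
    · convert hd using 1
      push_cast
      ring
    · rw [iteratedDeriv_succ]
      have : iteratedDeriv k f =ᶠ[nhds t] g := by
        filter_upwards [Ioi_mem_nhds ht] with s hs using hg' s hs
      rw [this.deriv_eq, (hd' t ht).deriv]


/-- For `p ≥ -1`, `q > 1`, `p < q - 2`, `0 < μ₀ < 1`, a positive integer `m`,
`b t = μ₀ (1+t)⁻¹ + (1+t)^p sin ((1+t)^q)` and `β₁ = -q + 1 + (-p+q-1)/(m+1)`, the derivatives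
of `b` satisfy `|b^(k)(t)| ≤ C (1+t)^(-β₁ (k+1))` for `k = 0, …, m` and `t ≥ 0`. -/
theorem stmt17 (p q μ₀ : ℝ) (m : ℕ) (hm : 1 ≤ m)
    (hp : -1 ≤ p) (hq : 1 < q) (hpq : p < q - 2)
    (hμ₀pos : 0 < μ₀) (hμ₀lt : μ₀ < 1)
    (b : ℝ → ℝ)
    (hb : ∀ t, b t = μ₀ * (1 + t)⁻¹ + (1 + t) ^ p * Real.sin ((1 + t) ^ q))
    (β₁ : ℝ) (hβ₁ : β₁ = -q + 1 + (-p + q - 1) / (m + 1)) :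
    ∃ C > (0:ℝ), ∀ t ≥ (0:ℝ), ∀ k ≤ m,
      |iteratedDeriv k b t| ≤ C * (1 + t) ^ (-β₁ * (k + 1)) := by
  have hbG : Good q p b := by
    have : b = fun t => μ₀ * (1 + t) ^ (-1 : ℝ) + 1 * (1 + t) ^ p * Real.sin ((1 + t) ^ q) := by
      funext t
      rw [hb, Real.rpow_neg_one, one_mul]
    rw [this]
    exact Good.add _ _ _ (Good.pow _ _ _ hp) (Good.sin _ _ _ le_rfl)
  have key : ∀ k : ℕ, ∃ C > (0 : ℝ), ∀ t ≥ (0 : ℝ),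
      |iteratedDeriv k b t| ≤ C * (1 + t) ^ (p + k * (q - 1)) := by
    intro k
    obtain ⟨g, hg, hg'⟩ := hbG.iter hq k
    obtain ⟨C, hC, hC'⟩ := hg.bound
    exact ⟨C, hC, fun t ht => by rw [hg' t (by linarith)]; exact hC' t ht⟩
  choose C hC hC' using key
  refine ⟨∑ k ∈ Finset.range (m + 1), C k,
    Finset.sum_pos (fun k _ => hC k) ⟨0, by simp⟩, fun t ht k hk => (hC' k t ht).trans ?_⟩
  have h1 : C k ≤ ∑ k ∈ Finset.range (m + 1), C k :=
    Finset.single_le_sum (f := C) (fun i _ => (hC i).le) (Finset.mem_range.2 (by omega))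
  have h2 : p + k * (q - 1) ≤ -β₁ * (k + 1) := by
    have hkm : (k : ℝ) ≤ m := by exact_mod_cast hk
    have hm0 : (0 : ℝ) < m + 1 := by positivity
    have h3 : ((k : ℝ) + 1) / (m + 1) ≤ 1 := by
      rw [div_le_one hm0]
      linarith
    have h4 : -β₁ * (k + 1) = (q - 1) * (k + 1) - (-p + q - 1) * ((k + 1) / (m + 1)) := by
      rw [hβ₁]
      ring
    rw [h4]
    nlinarith [mul_le_mul_of_nonneg_left h3 (by linarith : 0 ≤ -p + q - 1)]
  have h5 : (1 + t) ^ (p + k * (q - 1)) ≤ (1 + t) ^ (-β₁ * (k + 1)) :=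
    Real.rpow_le_rpow_of_exponent_le (by linarith) h2
  have h6 : 0 ≤ (1 + t) ^ (p + k * (q - 1)) := Real.rpow_nonneg (by linarith) _
  exact mul_le_mul h1 h5 h6 ((hC k).le.trans h1)
end
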